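/- Let 0 < ξ < 1 and let 1 ≤ q ≤ p and ℓ ≥ 0 be integers. Then the absolutely convergent sum Σ_W (1−ξ)^{pq} ξ^{Σ_{i,j} W_{ij}}, taken over all p×q matrices W with nonnegative integer entries and L(W) ≤ ℓ, equals Σ_λ (1−ξ)^{pq} ξ^{|λ|} K_p(λ) K_q(λ), taken over all partitions λ (of arbitrary weight) with λ₁ ≤ ℓ, and both equal Z_{p,q}^{−1} · Σ_{h ∈ ℕ^q, max_i h_i ≤ ℓ+q−1} Δ_q(h₁,…,h_q)² ∏_{i=1}^q ((h_i + p − q)!/h_i!)·ξ^{h_i}, where Z_{p,q} = ξ^{q(q−1)/2} (1−ξ)^{−pq} q! ∏_{j=0}^{q−1} j!·(p−q+j)!. (This common value is the probability that L(M) ≤ ℓ for a p×q random matrix M with independent geometrically distributed entries, P(M_{ij} = k) = (1−ξ)ξ^k for k = 0,1,2,….) -/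

import Mathlib

/-!
All three expressions are finite sums over the partitions `l` contained in the `q × ℓ` box, with
summand `(1 - ξ)^(pq) ξ^|l| K_p(l) K_q(l)`.

*Matrices.* The Robinson–Schensted–Knuth correspondence is set up through growth diagrams. To every
point `(i, j)` of the grid a partition is attached, starting from empty partitions on the axes and
using on each unit square the local rule `l₀ = max(m₀, n₀) + w`,
`lᵢ₊₁ = max(mᵢ₊₁, nᵢ₊₁) + min(mᵢ, nᵢ) - kᵢ`. Neighbouring partitions interlace, and the rule is
invertible, so matrices correspond to pairs of Gelfand–Tsetlin patterns with `q` and `p` levels and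
a common top row `l` (`rsk_bijOn`). The weight `|l|` is the sum of the entries (`growth_sum`), and
the first parts satisfy the last-passage recursion, so `l₀ = L(W)` (`Lnat_eq`).

*Partitions.* Recording how many entries of each row are at most `k` turns a semistandard tableau
into a Gelfand–Tsetlin pattern (`tab_ch_bijOn`), so `K_q` counts patterns (`ssytCount_eq`).

*Vandermonde determinants.* Put `hᵢ = lᵢ + q - 1 - i` for `0 ≤ i < q`. Then
`K_q(l) ∏ j! = Δ_q(h)` (`weyl`), by induction through the branching rule: with `Δ` written as a
determinant of rising factorials, the sum over interlacing rows is multilinear and telescopes.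
Adding `p - q` empty rows multiplies the Vandermonde product by the ratios `(hᵢ + p - q)! / hᵢ!`
and by factorials independent of `l` (`ch_ncard_pad`), which
evaluates `K_p(l)`. Finally `l ↦ h` is a bijection from the box to strictly decreasing tuples
(`toShape_bijOn`), and the summand in `h` is symmetric and vanishes on repeated entries, so the sum
over all tuples is `q!` times the sum over decreasing ones (`sum_symm`).
-/

open scoped BigOperators Classical

/-- The `i`-th largest element (0-indexed) of a multiset of naturals, `0` if absent. -/
def nthPart (μ : Multiset ℕ) (i : ℕ) : ℕ :=
  ((μ.sort (· ≤ ·)).reverse).getD i 0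

/-- Cells of the Young diagram whose parts are the multiset `μ`. -/
def shapeCells (μ : Multiset ℕ) : Finset (ℕ × ℕ) :=
  (Finset.range μ.card ×ˢ Finset.range (μ.sum + 1)).filter fun c => c.2 < nthPart μ c.1

/-- Number of semistandard Young tableaux of shape `μ` with entries in `{1,…,q}`. -/
noncomputable def ssytCount (q : ℕ) (μ : Multiset ℕ) : ℕ :=
  Set.ncard {T : ℕ × ℕ → ℕ |
    (∀ c, c ∉ shapeCells μ → T c = 0) ∧
    (∀ c ∈ shapeCells μ, 1 ≤ T c ∧ T c ≤ q) ∧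
    (∀ i j, (i, j + 1) ∈ shapeCells μ → T (i, j) ≤ T (i, j + 1)) ∧
    (∀ i j, (i + 1, j) ∈ shapeCells μ → T (i, j) < T (i + 1, j))}

/-- A right/down lattice path of cells from `(0,0)` to `(p-1,q-1)`. -/
def IsLatticePath (p q : ℕ) (path : List (ℕ × ℕ)) : Prop :=
  path.head? = some (0, 0) ∧ path.getLast? = some (p - 1, q - 1) ∧
  List.Chain' (fun a b => b = (a.1 + 1, a.2) ∨ b = (a.1, a.2 + 1)) path

/-- Sum of the entries of `W` along a path of cells. -/
def pathSum {α : Type*} [AddCommMonoid α] (W : ℕ → ℕ → α) (path : List (ℕ × ℕ)) : α :=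
  (path.map fun c => W c.1 c.2).sum

/-- `L(W)`: maximal sum of entries of `W` over right/down paths from `(1,1)` to `(p,q)`. -/
noncomputable def Lnat (p q : ℕ) (W : ℕ → ℕ → ℕ) : ℕ :=
  sSup {s : ℕ | ∃ path, IsLatticePath p q path ∧ s = pathSum W path}

/-- `p×q` matrices with nonnegative integer entries (stored on `range p × range q`)
whose maximal right/down path sum is at most `ℓ`. -/
def GoodW (p q ℓ : ℕ) : Set (ℕ → ℕ → ℕ) :=
  {W | (∀ i j, p ≤ i ∨ q ≤ j → W i j = 0) ∧ Lnat p q W ≤ ℓ}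

/-- Vandermonde product `Δ_n(x) = ∏_{i<j} (x_i − x_j)`. -/
def Vdm (n : ℕ) (x : Fin n → ℝ) : ℝ :=
  ∏ p ∈ Finset.univ.filter (fun p : Fin n × Fin n => p.1 < p.2), (x p.1 - x p.2)

/-! ### Interlacing sequences, the local rule and growth diagrams -/

/-- `Il m l`: the sequences interlace, `l₀ ≥ m₀ ≥ l₁ ≥ m₁ ≥ …`, i.e. `l / m` is a horizontal strip. -/
def Il (m l : ℕ → ℕ) : Prop := ∀ i, m i ≤ l i ∧ l (i + 1) ≤ m i

/-- Fomin's local rule for the RSK correspondence, in row-length form. The shapes `k ⊆ m, n` sit on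
three corners of a unit square carrying the entry `w`; the value is the shape on the fourth corner.
The first part follows the last-passage recursion; every later part is
`max (m (i+1)) (n (i+1)) + min (m i) (n i) - k i`. -/
def locRule (k m n : ℕ → ℕ) (w : ℕ) : ℕ → ℕ
  | 0 => max (m 0) (n 0) + w
  | i + 1 => max (m (i + 1)) (n (i + 1)) + min (m i) (n i) - k i

/-- The local rule run backwards: recovers the shape `k` from `m`, `n` and `l = locRule k m n w`
(the entry `w` being `l 0 - max (m 0) (n 0)`). -/
def revRule (m n l : ℕ → ℕ) : ℕ → ℕ := fun i =>
  max (m (i + 1)) (n (i + 1)) + min (m i) (n i) - l (i + 1)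

lemma locRule_il {k m n : ℕ → ℕ} (hm : Il k m) (hn : Il k n) (w : ℕ) :
    Il m (locRule k m n w) ∧ Il n (locRule k m n w) := by
  constructor <;> intro i <;> cases i with
  | zero => have := hm 0; have := hn 0; simp only [locRule]; omega
  | succ i =>
    have := hm i; have := hn i; have := hm (i + 1); have := hn (i + 1)
    simp only [locRule]; omega

lemma revRule_il {m n l : ℕ → ℕ} (hm : Il m l) (hn : Il n l) :
    Il (revRule m n l) m ∧ Il (revRule m n l) n := by
  constructor <;> intro i <;>
  · have := hm i; have := hn i; have := hm (i + 1); have := hn (i + 1)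
    simp only [revRule]; omega

lemma loc_rev {m n l : ℕ → ℕ} (hm : Il m l) (hn : Il n l) :
    locRule (revRule m n l) m n (l 0 - max (m 0) (n 0)) = l := by
  funext i
  cases i with
  | zero => have := hm 0; have := hn 0; simp only [locRule]; omega
  | succ i =>
    have := hm i; have := hn i; have := hm (i + 1); have := hn (i + 1)
    simp only [locRule, revRule]; omega

lemma locRule_inj {k k' m n : ℕ → ℕ} {w w' : ℕ} (hm : Il k m) (hn : Il k n)
    (hm' : Il k' m) (hn' : Il k' n) (h : locRule k m n w = locRule k' m n w') :
    k = k' ∧ w = w' := by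
  constructor
  · funext i
    have := congrFun h (i + 1)
    have := hm i; have := hn i; have := hm' i; have := hn' i
    simp only [locRule] at *; omega
  · have := congrFun h 0
    simp only [locRule] at *; omega

/-- Weight balance of the local rule on a truncation: since `max + min` is a sum, the parts telescope
and only the boundary term `max (m N) (n N)` is left over. -/
lemma locRule_sum {k m n : ℕ → ℕ} (hm : Il k m) (hn : Il k n) (w N : ℕ) :
    ∑ i ∈ Finset.range (N + 1), locRule k m n w i + ∑ i ∈ Finset.range N, k i
      = ∑ i ∈ Finset.range N, m i + ∑ i ∈ Finset.range N, n i + max (m N) (n N) + w := by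
  induction N with
  | zero => simp [locRule]
  | succ N ih =>
    rw [Finset.sum_range_succ _ (N + 1), Finset.sum_range_succ k, Finset.sum_range_succ m,
      Finset.sum_range_succ n]
    have := hm N; have := hn N
    simp only [locRule] at *; omega

/-- The growth diagram of `W`: `growth W i j` is the RSK shape of the upper left `i × j` block of
`W`, the shapes on the two coordinate axes being empty. -/
def growth (W : ℕ → ℕ → ℕ) : ℕ → ℕ → ℕ → ℕ
  | 0, _ => fun _ => 0
  | _ + 1, 0 => fun _ => 0
  | i + 1, j + 1 => locRule (growth W i j) (growth W i (j + 1)) (growth W (i + 1) j) (W i j)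

@[simp] lemma growth_zero_left (W j) : growth W 0 j = fun _ => 0 := by rw [growth]
@[simp] lemma growth_zero_right (W i) : growth W i 0 = fun _ => 0 := by
  cases i <;> rw [growth]
lemma growth_succ (W i j) : growth W (i + 1) (j + 1) =
    locRule (growth W i j) (growth W i (j + 1)) (growth W (i + 1) j) (W i j) := by rw [growth]

lemma growth_il (W : ℕ → ℕ → ℕ) (i j : ℕ) :
    Il (growth W i j) (growth W (i + 1) j) ∧ Il (growth W i j) (growth W i (j + 1)) := by
  induction i generalizing j with
  | zero =>
    refine ⟨?_, by simp [Il]⟩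
    induction j with
    | zero => simp [Il]
    | succ j ih =>
      rw [growth_succ]
      exact (locRule_il (by simp [Il]) ih _).1
  | succ i ihi =>
    induction j with
    | zero =>
      refine ⟨by simp [Il], ?_⟩
      rw [growth_succ]
      exact (locRule_il (ihi 0).2 (ihi 0).1 _).2
    | succ j ih =>
      have h2 : ∀ j, Il (growth W (i + 1) j) (growth W (i + 1) (j + 1)) := by
        intro j
        rw [growth_succ]
        exact (locRule_il (ihi j).2 (ihi j).1 _).2
      refine ⟨?_, h2 _⟩
      rw [growth_succ W (i + 1) j]
      exact (locRule_il (h2 j) ih.1 _).1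

lemma growth_supp (W : ℕ → ℕ → ℕ) (i j k : ℕ) (h : j ≤ k) : growth W i j k = 0 := by
  induction j generalizing k with
  | zero => simp
  | succ j ih =>
    obtain ⟨k, rfl⟩ : ∃ k', k = k' + 1 := ⟨k - 1, by omega⟩
    have := ((growth_il W i j).2 k).2
    have := ih k (by omega)
    omega

/-- The RSK shape of a block has as many cells as the sum of the entries of the block; all its rows
have index below `j ≤ N` by `growth_supp`. -/
lemma growth_sum (W : ℕ → ℕ → ℕ) (N i j : ℕ) (hj : j ≤ N) :
    ∑ k ∈ Finset.range N, growth W i j k = ∑ a ∈ Finset.range i, ∑ b ∈ Finset.range j, W a b := by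
  induction i generalizing j with
  | zero => simp
  | succ i ihi =>
    induction j with
    | zero => simp
    | succ j ih =>
      have h := locRule_sum (growth_il W i j).2 (growth_il W i j).1 (W i j) N
      rw [← growth_succ, Finset.sum_range_succ, ihi j (by omega), ihi (j + 1) hj, ih (by omega),
        growth_supp W _ _ _ hj, growth_supp W _ _ _ hj,
        growth_supp W _ _ _ (show j ≤ N by omega)] at h
      rw [Finset.sum_range_succ (fun a => ∑ b ∈ Finset.range j, W a b)] at h
      rw [Finset.sum_range_succ, Finset.sum_range_succ _ j]
      omega

/-- Gelfand–Tsetlin patterns with `q` levels and top row `l`: chains `∅ = P 0, P 1, …, P q = l`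
of successively interlacing sequences. The chain is continued by the constant `l` beyond level `q`,
so that a pattern is determined by its levels `0, …, q` and counting the set is meaningful. -/
def Ch (q : ℕ) (l : ℕ → ℕ) : Set (ℕ → ℕ → ℕ) :=
  {P | P 0 = (fun _ => 0) ∧ (∀ k < q, Il (P k) (P (k + 1))) ∧ ∀ k, q ≤ k → P k = l}

/-! ### Inverting the growth diagram -/

/-- Reconstruction of a growth diagram from its outer boundary: `backGrowth p q P Q a b` is the
shape at the point `(p - a, q - b)` when the chain `P` stands on the edge `i = p` and the chain `Q`
on the edge `j = q`. -/
def backGrowth (p q : ℕ) (P Q : ℕ → ℕ → ℕ) : ℕ → ℕ → ℕ → ℕ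
  | 0, b => P (q - b)
  | a + 1, 0 => Q (p - (a + 1))
  | a + 1, b + 1 => revRule (backGrowth p q P Q (a + 1) b) (backGrowth p q P Q a (b + 1))
      (backGrowth p q P Q a b)

lemma il_zero {m l : ℕ → ℕ} (h : Il m l) (hl : l = fun _ => 0) : m = fun _ => 0 := by
  funext i; have := h i; subst hl; simp only at this; omega

lemma backGrowth_il {p q : ℕ} {l : ℕ → ℕ} {P Q : ℕ → ℕ → ℕ} (hP : P ∈ Ch q l) (hQ : Q ∈ Ch p l)
    (a : ℕ) (ha : a ≤ p) :
    (∀ b < q, Il (backGrowth p q P Q a (b + 1)) (backGrowth p q P Q a b)) ∧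
    (a < p → ∀ b ≤ q, Il (backGrowth p q P Q (a + 1) b) (backGrowth p q P Q a b)) := by
  have key : ∀ a < p, (∀ b < q, Il (backGrowth p q P Q a (b + 1)) (backGrowth p q P Q a b)) →
      (∀ b ≤ q, Il (backGrowth p q P Q (a + 1) b) (backGrowth p q P Q a b)) := by
    intro a ha hV b hb
    induction b with
    | zero =>
      have h1 := hQ.2.1 (p - (a + 1)) (by omega)
      rw [show p - (a + 1) + 1 = p - a by omega] at h1
      rw [backGrowth]
      cases a with
      | zero =>
        rw [backGrowth, Nat.sub_zero, hP.2.2 q le_rfl, ← hQ.2.2 p le_rfl]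
        exact h1
      | succ a => rw [backGrowth]; exact h1
    | succ b ih =>
      rw [backGrowth]
      exact (revRule_il (ih (by omega)) (hV b (by omega))).2
  have main : ∀ b < q, Il (backGrowth p q P Q a (b + 1)) (backGrowth p q P Q a b) := by
    induction a with
    | zero =>
      intro b hb
      have h1 := hP.2.1 (q - (b + 1)) (by omega)
      rw [show q - (b + 1) + 1 = q - b by omega] at h1
      simpa only [backGrowth] using h1
    | succ a ih =>
      intro b hb
      have := ih (by omega)
      rw [backGrowth]
      exact (revRule_il (key a (by omega) this b (by omega)) (this b hb)).1
  exact ⟨main, fun h => key a h main⟩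

/-- The reconstructed diagram is empty on the two coordinate axes, because the chains start at the
empty shape and interlacing shapes below the empty shape are empty. -/
lemma backGrowth_last {p q : ℕ} (hp : 0 < p) {l : ℕ → ℕ} {P Q : ℕ → ℕ → ℕ}
    (hP : P ∈ Ch q l) (hQ : Q ∈ Ch p l) :
    (∀ b ≤ q, backGrowth p q P Q p b = fun _ => 0) ∧
    (∀ a ≤ p, backGrowth p q P Q a q = fun _ => 0) := by
  constructor
  · intro b hb
    induction b with
    | zero =>
      obtain ⟨a, rfl⟩ : ∃ a, p = a + 1 := ⟨p - 1, by omega⟩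
      rw [backGrowth, Nat.sub_self, hQ.1]
    | succ b ih => exact il_zero ((backGrowth_il hP hQ p le_rfl).1 b (by omega)) (ih (by omega))
  · intro a ha
    induction a with
    | zero => rw [backGrowth, Nat.sub_self, hP.1]
    | succ a ih =>
      exact il_zero ((backGrowth_il hP hQ a (by omega)).2 (by omega) q le_rfl) (ih (by omega))

/-- The matrix whose growth diagram has the boundary chains `P` and `Q`. -/
def backW (p q : ℕ) (P Q : ℕ → ℕ → ℕ) (i j : ℕ) : ℕ :=
  if i < p ∧ j < q then
    backGrowth p q P Q (p - (i + 1)) (q - (j + 1)) 0 -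
      max (backGrowth p q P Q (p - i) (q - (j + 1)) 0) (backGrowth p q P Q (p - (i + 1)) (q - j) 0)
  else 0

lemma growth_backW {p q : ℕ} (hp : 0 < p) {l : ℕ → ℕ} {P Q : ℕ → ℕ → ℕ}
    (hP : P ∈ Ch q l) (hQ : Q ∈ Ch p l) (i j : ℕ) (hi : i ≤ p) (hj : j ≤ q) :
    growth (backW p q P Q) i j = backGrowth p q P Q (p - i) (q - j) := by
  induction i generalizing j with
  | zero => rw [growth_zero_left, Nat.sub_zero, (backGrowth_last hp hP hQ).1 _ (by omega)]
  | succ i ihi =>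
    induction j with
    | zero => rw [growth_zero_right, Nat.sub_zero, (backGrowth_last hp hP hQ).2 _ (by omega)]
    | succ j ihj =>
      rw [growth_succ, ihi j (by omega) (by omega), ihi (j + 1) (by omega) hj,
        ihj (by omega), backW, if_pos ⟨hi, hj⟩]
      have hV := (backGrowth_il hP hQ (p - (i + 1)) (by omega)).1 (q - (j + 1)) (by omega)
      have hH := (backGrowth_il hP hQ (p - (i + 1)) (by omega)).2 (by omega) (q - (j + 1)) (by omega)
      obtain ⟨a, ha⟩ : ∃ a, p - (i + 1) = a := ⟨_, rfl⟩
      obtain ⟨b, hb⟩ : ∃ a, q - (j + 1) = a := ⟨_, rfl⟩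
      rw [show p - i = a + 1 by omega, show q - j = b + 1 by omega]
      rw [ha, hb] at hV hH ⊢
      rw [backGrowth]
      exact loc_rev hH hV

/-- Matrices of size `p × q` over `ℕ`, stored as functions vanishing outside the block. -/
def Mat (p q : ℕ) : Set (ℕ → ℕ → ℕ) := {W | ∀ i j, p ≤ i ∨ q ≤ j → W i j = 0}

/-- A matrix is determined by the shapes on the outer boundary of its growth diagram: the local rule
is injective, so these shapes propagate back to the origin. -/
lemma growth_inj {p q : ℕ} {W W' : ℕ → ℕ → ℕ} (hW : W ∈ Mat p q) (hW' : W' ∈ Mat p q)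
    (h1 : ∀ j ≤ q, growth W p j = growth W' p j) (h2 : ∀ i ≤ p, growth W i q = growth W' i q) :
    W = W' := by
  have key : ∀ a ≤ p, ∀ b ≤ q, growth W (p - a) (q - b) = growth W' (p - a) (q - b) ∧
      (0 < a → 0 < b → W (p - a) (q - b) = W' (p - a) (q - b)) := by
    intro a
    induction a with
    | zero => intro _ b hb; exact ⟨h1 _ (by omega), by omega⟩
    | succ a iha =>
      intro ha b
      induction b with
      | zero => intro _; exact ⟨h2 _ (by omega), by omega⟩
      | succ b ihb =>
        intro hb
        have e1 := (iha (by omega) b (by omega)).1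
        have e2 := (iha (by omega) (b + 1) hb).1
        have e3 := (ihb (by omega)).1
        obtain ⟨i, hi⟩ : ∃ i, p - (a + 1) = i := ⟨_, rfl⟩
        obtain ⟨j, hj⟩ : ∃ i, q - (b + 1) = i := ⟨_, rfl⟩
        rw [show p - a = i + 1 by omega, show q - b = j + 1 by omega] at e1
        rw [show p - a = i + 1 by omega, hj] at e2
        rw [hi, show q - b = j + 1 by omega] at e3
        rw [hi, hj]
        rw [growth_succ, growth_succ, e2, e3] at e1
        have := growth_il W i j
        have h' := growth_il W' i j
        rw [e2, e3] at this
        have := locRule_inj this.2 this.1 h'.2 h'.1 e1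
        exact ⟨this.1, fun _ _ => this.2⟩
  funext i j
  by_cases hij : i < p ∧ j < q
  · have := (key (p - i) (by omega) (q - j) (by omega)).2 (by omega) (by omega)
    rwa [show p - (p - i) = i by omega, show q - (q - j) = j by omega] at this
  · rw [hW i j (by omega), hW' i j (by omega)]

/-- The RSK correspondence: `p × q` matrices whose RSK shape is `l` are in bijection with pairs of
Gelfand–Tsetlin patterns with `q` and `p` levels and common top row `l`, read off along the two
outer edges of the growth diagram. -/
theorem rsk_bijOn {p q : ℕ} (hp : 0 < p) (l : ℕ → ℕ) :
    Set.BijOn (fun W => ((fun j => growth W p (min j q) : ℕ → ℕ → ℕ),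
        (fun i => growth W (min i p) q : ℕ → ℕ → ℕ)))
      {W | W ∈ Mat p q ∧ growth W p q = l} (Ch q l ×ˢ Ch p l) := by
  refine ⟨?_, ?_, ?_⟩
  · rintro W ⟨hW, hl⟩
    refine ⟨⟨?_, ?_, ?_⟩, ⟨?_, ?_, ?_⟩⟩
    · simp
    · intro k hk
      simp only [min_eq_left hk.le, min_eq_left (Nat.succ_le_of_lt hk)]
      exact (growth_il W p k).2
    · intro k hk
      simp only [min_eq_right hk, hl]
    · simp
    · intro k hk
      simp only [min_eq_left hk.le, min_eq_left (Nat.succ_le_of_lt hk)]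
      exact (growth_il W k q).1
    · intro k hk
      simp only [min_eq_right hk, hl]
  · rintro W ⟨hW, hl⟩ W' ⟨hW', hl'⟩ h
    simp only [Prod.mk.injEq] at h
    refine growth_inj hW hW' ?_ ?_
    · intro j hj
      have := congrFun h.1 j
      simpa only [min_eq_left hj] using this
    · intro j hj
      have := congrFun h.2 j
      simpa only [min_eq_left hj] using this
  · rintro ⟨P, Q⟩ ⟨hP, hQ⟩
    simp only at hP hQ
    have hg := growth_backW hp hP hQ
    refine ⟨backW p q P Q, ⟨?_, ?_⟩, ?_⟩
    · intro i j hij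
      rw [backW, if_neg (by omega)]
    · rw [hg p q le_rfl le_rfl, Nat.sub_self, Nat.sub_self, backGrowth, Nat.sub_zero,
        hP.2.2 q le_rfl]
    · simp only [Prod.mk.injEq]
      constructor
      · refine funext fun j => ?_
        rw [hg p _ le_rfl (by omega), Nat.sub_self, backGrowth]
        rcases le_total j q with h | h
        · rw [min_eq_left h, Nat.sub_sub_self h]
        · rw [min_eq_right h, Nat.sub_self, Nat.sub_zero, hP.2.2 j h, hP.2.2 q le_rfl]
      · refine funext fun i => ?_
        rw [hg _ q (by omega) le_rfl, Nat.sub_self]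
        rcases le_total p i with h | h
        · rw [min_eq_right h, Nat.sub_self, backGrowth, Nat.sub_zero, hP.2.2 q le_rfl, hQ.2.2 i h]
        · rw [min_eq_left h]
          rcases h.eq_or_lt with rfl | h
          · rw [Nat.sub_self, backGrowth, Nat.sub_zero, hP.2.2 q le_rfl, hQ.2.2 i le_rfl]
          · obtain ⟨a, ha⟩ : ∃ a, p - i = a + 1 := ⟨p - i - 1, by omega⟩
            rw [ha, backGrowth, ← ha, Nat.sub_sub_self h.le]

/-! ### Lattice paths and the first part of the shape -/

lemma growth_succ_zero (W i j) : growth W (i + 1) (j + 1) 0 =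
    max (growth W i (j + 1) 0) (growth W (i + 1) j 0) + W i j := by rw [growth_succ, locRule]

lemma pathSum_append {W : ℕ → ℕ → ℕ} (l : List (ℕ × ℕ)) (c) :
    pathSum W (l ++ [c]) = pathSum W l + W c.1 c.2 := by
  simp [pathSum]

/-- Every lattice path from the corner to `(i, j)` is bounded by the first part of the shape. -/
lemma path_le (W : ℕ → ℕ → ℕ) (l : List (ℕ × ℕ)) :
    ∀ i j, l.head? = some (0, 0) → l.getLast? = some (i, j) →
    List.IsChain (fun a b => b = (a.1 + 1, a.2) ∨ b = (a.1, a.2 + 1)) l →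
    pathSum W l ≤ growth W (i + 1) (j + 1) 0 := by
  induction l using List.reverseRecOn with
  | nil => simp
  | append_singleton l c ih =>
    intro i j h0 hl hc
    rw [List.getLast?_concat, Option.some.injEq] at hl
    subst hl
    rw [pathSum_append, growth_succ_zero]
    rw [List.isChain_append] at hc
    gcongr
    rcases l.eq_nil_or_concat' with rfl | ⟨l', d, rfl⟩
    · simp [pathSum]
    · have hd := hc.2.2 d (by simp) (i, j) (by simp)
      have h0' : (l' ++ [d]).head? = some (0, 0) := by
        rw [List.head?_append_of_ne_nil _ (by simp)] at h0; exact h0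
      have := ih d.1 d.2 h0' (by simp) hc.1
      rcases hd with hd | hd <;> (simp only [Prod.mk.injEq] at hd; obtain ⟨rfl, rfl⟩ := hd)
      · exact this.trans (le_max_left _ _)
      · exact this.trans (le_max_right _ _)

/-- The first part of the shape is attained by a lattice path, which is built by following the
larger of the two neighbours in the last-passage recursion. -/
lemma path_exists (W : ℕ → ℕ → ℕ) (i j : ℕ) :
    ∃ l : List (ℕ × ℕ), l.head? = some (0, 0) ∧ l.getLast? = some (i, j) ∧
      List.IsChain (fun a b => b = (a.1 + 1, a.2) ∨ b = (a.1, a.2 + 1)) l ∧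
      pathSum W l = growth W (i + 1) (j + 1) 0 := by
  have step : ∀ i j i' j', (∃ l : List (ℕ × ℕ), l.head? = some (0, 0) ∧ l.getLast? = some (i, j) ∧
      List.IsChain (fun a b => b = (a.1 + 1, a.2) ∨ b = (a.1, a.2 + 1)) l ∧
      pathSum W l = growth W (i + 1) (j + 1) 0) →
      ((i', j') = (i + 1, j) ∨ (i', j') = (i, j + 1)) →
      growth W (i' + 1) (j' + 1) 0 = growth W (i + 1) (j + 1) 0 + W i' j' →
      (∃ l : List (ℕ × ℕ), l.head? = some (0, 0) ∧ l.getLast? = some (i', j') ∧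
      List.IsChain (fun a b => b = (a.1 + 1, a.2) ∨ b = (a.1, a.2 + 1)) l ∧
      pathSum W l = growth W (i' + 1) (j' + 1) 0) := by
    rintro i j i' j' ⟨l, h0, hl, hc, hs⟩ hstep hg
    refine ⟨l ++ [(i', j')], ?_, by simp, ?_, ?_⟩
    · rw [List.head?_append, h0]; rfl
    · rw [List.isChain_append]
      refine ⟨hc, by simp, ?_⟩
      intro x hx y hy
      rw [hl] at hx
      simp only [Option.mem_def, Option.some.injEq, List.head?_cons] at hx hy
      subst hx hy
      exact hstep
    · rw [pathSum_append, hs, hg]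
  induction i generalizing j with
  | zero =>
    induction j with
    | zero => exact ⟨[(0, 0)], by simp [pathSum, growth_succ_zero]⟩
    | succ j ih =>
      refine step 0 j _ _ ih (Or.inr rfl) ?_
      rw [growth_succ_zero W 0 (j + 1)]; simp
  | succ i ihi =>
    induction j with
    | zero =>
      refine step i 0 _ _ (ihi 0) (Or.inl rfl) ?_
      rw [growth_succ_zero W (i + 1) 0]; simp
    | succ j ihj =>
      rcases le_total (growth W (i + 1) (j + 1 + 1) 0) (growth W (i + 1 + 1) (j + 1) 0) with h | h
      · refine step (i + 1) j _ _ ihj (Or.inr rfl) ?_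
        rw [growth_succ_zero W (i + 1) (j + 1), max_eq_right h]
      · refine step i (j + 1) _ _ (ihi _) (Or.inl rfl) ?_
        rw [growth_succ_zero W (i + 1) (j + 1), max_eq_left h]

/-- Greene's theorem for the first row: `L(W)` is the first part of the RSK shape of `W`. -/
theorem Lnat_eq {p q : ℕ} (hp : 0 < p) (hq : 0 < q) (W : ℕ → ℕ → ℕ) :
    Lnat p q W = growth W p q 0 := by
  obtain ⟨p, rfl⟩ : ∃ a, p = a + 1 := ⟨p - 1, by omega⟩
  obtain ⟨q, rfl⟩ : ∃ a, q = a + 1 := ⟨q - 1, by omega⟩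
  apply IsGreatest.csSup_eq
  constructor
  · obtain ⟨l, h0, hl, hc, hs⟩ := path_exists W p q
    exact ⟨l, ⟨h0, hl, hc⟩, hs.symm⟩
  · rintro s ⟨l, ⟨h0, hl, hc⟩, rfl⟩
    exact path_le W l p q h0 hl hc

/-! ### Gelfand–Tsetlin patterns and semistandard tableaux -/

lemma ch_supp {q : ℕ} {l : ℕ → ℕ} {P} (hP : P ∈ Ch q l) (k i : ℕ) (hk : k ≤ q) (hi : k ≤ i) :
    P k i = 0 := by
  induction k generalizing i with
  | zero => rw [hP.1]
  | succ k ih =>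
    obtain ⟨i, rfl⟩ : ∃ a, i = a + 1 := ⟨i - 1, by omega⟩
    have := (hP.2.1 k (by omega) i).2
    have := ih i (by omega) (by omega)
    omega

lemma ch_mono {q : ℕ} {l : ℕ → ℕ} {P} (hP : P ∈ Ch q l) (i : ℕ) : Monotone (fun k => P k i) := by
  refine monotone_nat_of_le_succ fun k => ?_
  by_cases hk : k < q
  · exact (hP.2.1 k hk i).1
  · rw [hP.2.2 k (by omega), hP.2.2 (k + 1) (by omega)]

lemma ch_le {q : ℕ} {l : ℕ → ℕ} {P} (hP : P ∈ Ch q l) (k i : ℕ) : P k i ≤ l i := by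
  have := ch_mono hP i (le_max_left k q)
  dsimp only at this
  rwa [hP.2.2 (max k q) (le_max_right _ _)] at this

/-- There are no patterns with `q` levels when the shape has more than `q` rows. -/
lemma ch_empty {q : ℕ} {l : ℕ → ℕ} (i : ℕ) (hi : q ≤ i) (hl : l i ≠ 0) : Ch q l = ∅ := by
  ext P
  simp only [Set.mem_empty_iff_false, iff_false]
  intro hP
  have := ch_supp hP q i le_rfl hi
  rw [hP.2.2 q le_rfl] at this
  exact hl this

lemma ch_antitone {q : ℕ} {l : ℕ → ℕ} {P} (hP : P ∈ Ch q l) : Antitone l := by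
  refine antitone_nat_of_succ_le fun i => ?_
  cases q with
  | zero => rw [← hP.2.2 0 le_rfl, hP.1]
  | succ q =>
    have := hP.2.1 q (by omega) i
    rw [hP.2.2 (q + 1) le_rfl] at this
    omega

/-- Semistandard tableaux with row lengths `l` and entries in `{1, …, q}`, extended by `0` outside
the diagram. -/
def Tab (q : ℕ) (l : ℕ → ℕ) : Set (ℕ × ℕ → ℕ) := {T |
    (∀ i j, l i ≤ j → T (i, j) = 0) ∧
    (∀ i j, j < l i → 1 ≤ T (i, j) ∧ T (i, j) ≤ q) ∧
    (∀ i j, j + 1 < l i → T (i, j) ≤ T (i, j + 1)) ∧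
    (∀ i j, j < l (i + 1) → T (i, j) < T (i + 1, j))}

lemma tab_mono {q l T} (hT : T ∈ Tab q l) (i j j' : ℕ) (h : j ≤ j') (hj : j' < l i) :
    T (i, j) ≤ T (i, j') := by
  induction j', h using Nat.le_induction with
  | base => rfl
  | succ j' _ ih => exact (ih (by omega)).trans (hT.2.2.1 i j' hj)

/-- The pattern of a tableau: the number of cells in row `i` with entry at most `k`. -/
def tabCh (l : ℕ → ℕ) (T : ℕ × ℕ → ℕ) (k i : ℕ) : ℕ :=
  ((Finset.range (l i)).filter fun j => T (i, j) ≤ k).card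

lemma lt_tabCh {q l T} (hT : T ∈ Tab q l) (k i j : ℕ) :
    j < tabCh l T k i ↔ j < l i ∧ T (i, j) ≤ k := by
  constructor
  · intro h
    by_contra hcon
    have : (Finset.range (l i)).filter (fun j => T (i, j) ≤ k) ⊆ Finset.range j := by
      intro j' hj'
      simp only [Finset.mem_filter, Finset.mem_range] at hj' ⊢
      by_contra hlt
      exact hcon ⟨by omega, (tab_mono hT i j j' (by omega) hj'.1).trans hj'.2⟩
    have := Finset.card_le_card this
    rw [Finset.card_range] at this
    unfold tabCh at h
    omega
  · rintro ⟨h1, h2⟩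
    have : Finset.range (j + 1) ⊆ (Finset.range (l i)).filter (fun j => T (i, j) ≤ k) := by
      intro j' hj'
      simp only [Finset.mem_filter, Finset.mem_range] at hj' ⊢
      exact ⟨by omega, (tab_mono hT i j' j (by omega) h1).trans h2⟩
    have := Finset.card_le_card this
    rw [Finset.card_range] at this
    unfold tabCh
    omega

/-- The tableau of a pattern: the entry in cell `(i, j)` is the least `k` with `j < P k i`, written
as the number of levels `k < q` with `P k i ≤ j`. -/
def chTab (q : ℕ) (l : ℕ → ℕ) (P : ℕ → ℕ → ℕ) (c : ℕ × ℕ) : ℕ :=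
  if c.2 < l c.1 then ((Finset.range q).filter fun k => P k c.1 ≤ c.2).card else 0

lemma chTab_le {q l P} (hP : P ∈ Ch q l) (i j k : ℕ) (hj : j < l i) :
    chTab q l P (i, j) ≤ k ↔ j < P k i := by
  have hm := ch_mono hP i
  rw [chTab, if_pos hj]
  constructor
  · intro h
    by_contra hcon
    have hk : k < q := by
      by_contra hk
      rw [hP.2.2 k (by omega)] at hcon; exact hcon hj
    have : Finset.range (k + 1) ⊆ (Finset.range q).filter (fun k => P k i ≤ j) := by
      intro k' hk'
      simp only [Finset.mem_filter, Finset.mem_range] at hk' ⊢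
      have : P k' i ≤ P k i := hm (by omega)
      omega
    have := Finset.card_le_card this
    rw [Finset.card_range] at this
    dsimp only at h
    omega
  · intro h
    have : (Finset.range q).filter (fun k => P k i ≤ j) ⊆ Finset.range k := by
      intro k' hk'
      simp only [Finset.mem_filter, Finset.mem_range] at hk' ⊢
      by_contra hlt
      have : P k i ≤ P k' i := hm (by omega)
      omega
    have := Finset.card_le_card this
    rwa [Finset.card_range] at this

lemma tab_ch_bijOn (q : ℕ) {l : ℕ → ℕ} (hl : Antitone l) :
    Set.BijOn (tabCh l) (Tab q l) (Ch q l) := by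
  refine ⟨?_, ?_, ?_⟩
  · intro T hT
    have key := lt_tabCh hT
    refine ⟨?_, ?_, ?_⟩
    · funext i
      by_contra h
      have := (key 0 i 0).1 (Nat.pos_of_ne_zero h)
      have := hT.2.1 i 0 this.1
      omega
    · intro k hk i
      constructor
      · refine le_of_forall_lt fun j hj => ?_
        rw [key] at hj ⊢
        exact ⟨hj.1, by omega⟩
      · refine le_of_forall_lt fun j hj => ?_
        rw [key] at hj ⊢
        have := hT.2.2.2 i j hj.1
        exact ⟨hj.1.trans_le (hl (Nat.le_succ i)), by omega⟩
    · intro k hk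
      funext i
      refine Nat.le_antisymm ?_ ?_ <;> refine le_of_forall_lt fun j hj => ?_
      · rw [key] at hj; exact hj.1
      · rw [key]; exact ⟨hj, (hT.2.1 i j hj).2.trans hk⟩
  · intro T hT T' hT' h
    funext ⟨i, j⟩
    by_cases hj : j < l i
    · have : ∀ k, T (i, j) ≤ k ↔ T' (i, j) ≤ k := by
        intro k
        have h1 := lt_tabCh hT k i j
        have h2 := lt_tabCh hT' k i j
        rw [h] at h1
        rw [h1] at h2
        simpa [hj] using h2
      exact le_antisymm ((this _).2 le_rfl) ((this _).1 le_rfl)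
    · rw [hT.1 i j (by omega), hT'.1 i j (by omega)]
  · intro P hP
    have key := chTab_le hP
    have hT : chTab q l P ∈ Tab q l := by
      refine ⟨?_, ?_, ?_, ?_⟩
      · intro i j h
        rw [chTab, if_neg (by simpa using h)]
      · intro i j h
        refine ⟨?_, ?_⟩
        · by_contra h0
          have := (key i j 0 h).1 (by omega)
          rw [hP.1] at this; simp at this
        · rw [key i j q h, hP.2.2 q le_rfl]; exact h
      · intro i j h
        rw [key i j _ (by omega)]
        have := (key i (j + 1) _ h).1 le_rfl
        omega
      · intro i j h
        have hj : j < l i := h.trans_le (hl (Nat.le_succ i))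
        obtain ⟨t, ht⟩ : ∃ t, chTab q l P (i + 1, j) = t := ⟨_, rfl⟩
        have h1 := (key (i + 1) j t h).1 ht.le
        cases t with
        | zero => rw [hP.1] at h1; simp at h1
        | succ t =>
          rw [ht, Nat.lt_succ_iff, key i j t hj]
          by_cases htq : t < q
          · exact h1.trans_le (hP.2.1 t htq i).2
          · rw [hP.2.2 t (by omega)]; exact hj
    refine ⟨_, hT, ?_⟩
    funext k i
    refine Nat.le_antisymm ?_ ?_ <;> refine le_of_forall_lt fun j hj => ?_
    · rw [lt_tabCh hT] at hj; exact (key i j k hj.1).1 hj.2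
    · have : j < l i := hj.trans_le (ch_le hP k i)
      rw [lt_tabCh hT, key i j k this]; exact ⟨this, hj⟩

/-! ### Counting patterns: the Weyl dimension formula -/

lemma ch_finite (q : ℕ) (l : ℕ → ℕ) : (Ch q l).Finite := by
  by_cases hs : ∀ i, q ≤ i → l i = 0
  swap
  · push Not at hs
    obtain ⟨i, hi, h⟩ := hs
    rw [ch_empty i hi h]; exact Set.finite_empty
  refine Set.Finite.of_injOn (f := fun P => fun (k i : Fin q) => (Fin.ofNat (l 0 + 1) (P k i)))
    (t := Set.univ) (fun _ _ => Set.mem_univ _) ?_ Set.finite_univ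
  intro P hP P' hP' h
  funext k i
  by_cases hk : k < q
  · by_cases hi : i < q
    · have h1 := congrArg Fin.val (congrFun (congrFun h ⟨k, hk⟩) ⟨i, hi⟩)
      have hb : l i ≤ l 0 := ch_antitone hP (Nat.zero_le i)
      have := ch_le hP k i
      have := ch_le hP' k i
      simp only [Fin.ofNat] at h1
      rwa [Nat.mod_eq_of_lt (by omega), Nat.mod_eq_of_lt (by omega)] at h1
    · rw [ch_supp hP k i hk.le (by omega), ch_supp hP' k i hk.le (by omega)]
  · rw [hP.2.2 k (by omega), hP'.2.2 k (by omega)]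

/-- Extension by zero of a finite row to a sequence. -/
def ext0 {q : ℕ} (f : Fin q → ℕ) (i : ℕ) : ℕ := if h : i < q then f ⟨i, h⟩ else 0

/-- Deleting the top row of a pattern with `q + 1` levels whose next row is `f`. -/
lemma ch_fiber (q : ℕ) (l : ℕ → ℕ) (hs : ∀ i, q + 1 ≤ i → l i = 0) (f : Fin q → ℕ)
    (hf : ∀ i : Fin q, l (i + 1) ≤ f i ∧ f i ≤ l i) :
    Set.BijOn (fun (P : ℕ → ℕ → ℕ) k => P (min k q))
      {P | P ∈ Ch (q + 1) l ∧ (fun i : Fin q => P q i) = f} (Ch q (ext0 f)) := by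
  have hIl : Il (ext0 f) l := by
    intro i
    unfold ext0
    split_ifs with h
    · exact (hf ⟨i, h⟩).symm
    · exact ⟨Nat.zero_le _, (hs _ (by omega)).le⟩
  refine ⟨?_, ?_, ?_⟩
  · rintro P ⟨hP, rfl⟩
    refine ⟨by simp [hP.1], ?_, ?_⟩
    · intro k hk
      have := hP.2.1 k (by omega)
      simpa only [min_eq_left hk.le, min_eq_left (Nat.succ_le_of_lt hk)] using this
    · intro k hk
      funext i
      unfold ext0
      dsimp only
      rw [min_eq_right hk]
      split_ifs with h
      · rfl
      · exact ch_supp hP q i (by omega) (by omega)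
  · rintro P ⟨hP, h⟩ P' ⟨hP', h'⟩ he
    refine funext fun k => ?_
    by_cases hk : k ≤ q
    · have := congrFun he k
      simpa only [min_eq_left hk] using this
    · rw [hP.2.2 k (by omega), hP'.2.2 k (by omega)]
  · intro P hP
    refine ⟨fun k => if k ≤ q then P k else l, ⟨⟨?_, ?_, ?_⟩, ?_⟩, ?_⟩
    · simp [hP.1]
    · intro k hk
      dsimp only
      rw [if_pos (by omega)]
      split_ifs with h
      · exact hP.2.1 k (by omega)
      · rw [hP.2.2 k (by omega)]; exact hIl
    · intro k hk
      dsimp only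
      rw [if_neg (by omega)]
    · funext i
      dsimp only
      rw [if_pos le_rfl, hP.2.2 q le_rfl]
      simp [ext0]
    · refine funext fun k => ?_
      dsimp only
      rw [if_pos (by omega)]
      rcases le_total k q with h | h
      · rw [min_eq_left h]
      · rw [min_eq_right h, hP.2.2 k h, hP.2.2 q le_rfl]

/-- The branching rule: patterns are counted by summing over the row below the top one. -/
lemma ch_ncard_succ (q : ℕ) (l : ℕ → ℕ) (hs : ∀ i, q + 1 ≤ i → l i = 0) :
    (Ch (q + 1) l).ncard = ∑ f ∈ Fintype.piFinset (fun i : Fin q => Finset.Icc (l (i + 1)) (l i)),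
      (Ch q (ext0 f)).ncard := by
  rw [Set.ncard_eq_toFinset_card _ (ch_finite _ _),
    Finset.card_eq_sum_card_fiberwise (f := fun P => fun i : Fin q => P q i)
      (t := Fintype.piFinset (fun i : Fin q => Finset.Icc (l (i + 1)) (l i)))]
  · refine Finset.sum_congr rfl fun f hf => ?_
    rw [Fintype.mem_piFinset] at hf
    rw [← (ch_fiber q l hs f (fun i => Finset.mem_Icc.1 (hf i))).ncard_eq, ← Set.ncard_coe_finset]
    congr 1
    ext P
    simp
  · intro P hP
    simp only [Set.Finite.coe_toFinset] at hP
    rw [Finset.mem_coe, Fintype.mem_piFinset]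
    intro i
    rw [Finset.mem_Icc]
    have := hP.2.1 q (by omega) i
    rw [hP.2.2 (q + 1) le_rfl] at this
    exact this.symm

/-- The rising factorial `x (x + 1) ⋯ (x + j - 1)`. -/
noncomputable def rise (j : ℕ) (x : ℝ) : ℝ := (ascPochhammer ℝ j).eval x

lemma rise_diff (j : ℕ) (x : ℝ) :
    ((j : ℝ) + 1) * rise j (x + 1) = rise (j + 1) (x + 1) - rise (j + 1) x := by
  have h2 : rise (j + 1) x = x * rise j (x + 1) := by
    unfold rise; rw [ascPochhammer_succ_left]; simp
  have h1 : rise (j + 1) (x + 1) = rise j (x + 1) * (x + 1 + j) := by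
    unfold rise; rw [ascPochhammer_succ_eval]
  rw [h1, h2]; ring

/-- The backward difference of a rising factorial telescopes over an interval. The rising factorials are
taken at negative arguments, so that consecutive integers `m + c` decrease the argument. -/
lemma rise_sum (j b a c : ℕ) (h : b ≤ a) :
    ((j : ℝ) + 1) * ∑ m ∈ Finset.Icc b a, rise j (-((m + c : ℕ) : ℝ)) =
      rise (j + 1) (-((b + c : ℕ) : ℝ)) - rise (j + 1) (-((a + c + 1 : ℕ) : ℝ)) := by
  have hd : ∀ a : ℕ, ((j : ℝ) + 1) * rise j (-((a + c : ℕ) : ℝ)) =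
      rise (j + 1) (-((a + c : ℕ) : ℝ)) - rise (j + 1) (-((a + c + 1 : ℕ) : ℝ)) := by
    intro a
    have := rise_diff j (-((a + c + 1 : ℕ) : ℝ))
    rwa [show -((a + c + 1 : ℕ) : ℝ) + 1 = -((a + c : ℕ) : ℝ) by push_cast; ring] at this
  induction a, h using Nat.le_induction with
  | base => rw [Finset.Icc_self, Finset.sum_singleton, hd]
  | succ a hab ih =>
    rw [← Finset.insert_Icc_right_eq_Icc_add_one (by omega), Finset.sum_insert (by simp), mul_add, ih, hd,
      show a + 1 + c = a + c + 1 by ring]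
    ring

/-- The Vandermonde product as a determinant in the basis of rising factorials. The factors
`x i - x j` with `i < j` have the sign of the determinant at the points `-x i`. -/
lemma Vdm_eq_det (n : ℕ) (x : Fin n → ℝ) :
    Vdm n x = (Matrix.of fun i j : Fin n => rise j (-(x i))).det := by
  have := Matrix.det_eval_matrixOfPolynomials_eq_det_vandermonde (fun i => -(x i))
    (fun j : Fin n => ascPochhammer ℝ j) (fun i => ascPochhammer_natDegree _ _)
    (fun i => monic_ascPochhammer ℝ i)
  unfold rise
  rw [← this, Matrix.det_vandermonde, Vdm, Finset.prod_filter, ← Finset.univ_product_univ,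
    Finset.prod_product]
  refine Finset.prod_congr rfl fun i _ => ?_
  rw [← Finset.prod_filter]
  refine Finset.prod_congr (by ext; simp) fun j _ => by ring

/-- Subtracting from every row its predecessor and expanding along the first column of a matrix whose
first column consists of ones. -/
lemma det_diff (q : ℕ) (A : Matrix (Fin (q + 1)) (Fin (q + 1)) ℝ) (h1 : ∀ i, A i 0 = 1) :
    A.det = (Matrix.of fun i j : Fin q => A i.succ j.succ - A i.castSucc j.succ).det := by
  rw [Matrix.det_eq_of_forall_row_eq_smul_add_pred (A := A)
    (B := Matrix.of (Fin.cons (A 0) (fun i j => A i.succ j - A i.castSucc j))) (fun _ => 1)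
    (by simp) (by simp)]
  rw [Matrix.det_succ_column_zero, Fin.sum_univ_succ]
  simp [h1]
  congr 1

/-- Weyl's dimension formula for patterns: with `h i = l i + q - 1 - i`, their number is
`Δ(h) / ∏ j!`. In the induction on `q` the branching rule sums a determinant over a product of
intervals, one for each row; by multilinearity the sum goes inside the rows, where it telescopes to
a difference of consecutive rows of the determinant of size `q + 1`. -/
theorem weyl (q : ℕ) (l : ℕ → ℕ) (hl : Antitone l) (hs : ∀ i, q ≤ i → l i = 0) :
    ((Ch q l).ncard : ℝ) * ∏ j ∈ Finset.range q, (j.factorial : ℝ) =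
      Vdm q (fun i => ((l i + (q - 1 - i) : ℕ) : ℝ)) := by
  induction q generalizing l with
  | zero =>
    have : Ch 0 l = {fun _ => l} := by
      ext P
      simp only [Ch, Set.mem_ofPred_eq, Set.mem_singleton_iff]
      constructor
      · rintro ⟨_, _, h⟩; funext k; rw [h k (Nat.zero_le _)]
      · rintro rfl
        exact ⟨funext fun i => hs i (Nat.zero_le _), by simp, by simp⟩
    rw [this]; simp [Vdm]
  | succ q ih =>
    rw [ch_ncard_succ q l hs, Finset.prod_range_succ']
    have hfac : ∏ k ∈ Finset.range q, ((k + 1).factorial : ℝ) =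
        (∏ k ∈ Finset.range q, (k.factorial : ℝ)) * ∏ k : Fin q, ((k : ℕ) + 1 : ℝ) := by
      rw [Fin.prod_univ_eq_prod_range (fun k => (k + 1 : ℝ)), ← Finset.prod_mul_distrib]
      refine Finset.prod_congr rfl fun k _ => ?_
      rw [Nat.factorial_succ]; push_cast; ring
    rw [hfac, Nat.factorial_zero, Nat.cast_one, mul_one, ← mul_assoc, Nat.cast_sum, Finset.sum_mul]
    have step : ∀ f ∈ Fintype.piFinset (fun i : Fin q => Finset.Icc (l (i + 1)) (l i)),
        ((Ch q (ext0 f)).ncard : ℝ) * ∏ k ∈ Finset.range q, (k.factorial : ℝ) =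
        Matrix.detRowAlternating (fun i => (fun (i : Fin q) (m : ℕ) (j : Fin q) =>
          rise j (-((m + (q - 1 - i) : ℕ) : ℝ))) i (f i)) := by
      intro f hf
      rw [Fintype.mem_piFinset] at hf
      rw [ih, Vdm_eq_det]
      · simp only [ext0, Fin.is_lt, dite_true]
        rfl
      · refine antitone_nat_of_succ_le fun i => ?_
        unfold ext0
        split_ifs with h1 h2
        · exact (Finset.mem_Icc.1 (hf ⟨i + 1, h1⟩)).2.trans (Finset.mem_Icc.1 (hf ⟨i, h2⟩)).1
        · omega
        · omega
        · rfl
      · intro i hi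
        rw [ext0, dif_neg (by omega)]
    rw [Finset.sum_congr rfl step]
    -- the determinant is multilinear in its rows, and row `i` depends on the summation variable `m i` only
    have hm := MultilinearMap.map_sum_finset
      (Matrix.detRowAlternating (n := Fin q) (R := ℝ)).toMultilinearMap
      (fun (i : Fin q) (m : ℕ) (j : Fin q) => rise j (-((m + (q - 1 - i) : ℕ) : ℝ)))
      (fun i : Fin q => Finset.Icc (l (i + 1)) (l i))
    simp only [AlternatingMap.coe_multilinearMap] at hm
    have hrow : (fun i : Fin q => ∑ m ∈ Finset.Icc (l (i + 1)) (l i), fun j : Fin q =>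
          rise j (-((m + (q - 1 - i) : ℕ) : ℝ))) =
        fun i j : Fin q => ∑ m ∈ Finset.Icc (l (i + 1)) (l i), rise j (-((m + (q - 1 - i) : ℕ) : ℝ)) := by
      funext i j; rw [Finset.sum_apply]
    rw [hrow] at hm
    rw [← hm, mul_comm]
    rw [Vdm_eq_det, det_diff _ _ (by intro i; simp [rise])]
    change _ * Matrix.det (Matrix.of _) = _
    rw [← Matrix.det_mul_row]
    congr 1
    ext i j
    refine (rise_sum j _ _ (q - 1 - i) (hl (Nat.le_succ i))).trans ?_
    simp only [Matrix.of_apply, Fin.val_succ, Fin.val_castSucc, Nat.succ_eq_add_one]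
    rw [show l (i + 1) + (q - 1 - i) = l (i + 1) + (q + 1 - 1 - (i + 1)) by omega,
      show l i + (q - 1 - i) + 1 = l i + (q + 1 - 1 - i) by omega]

/-! ### Padding with empty rows -/

lemma Vdm_succ (n : ℕ) (x : Fin (n + 1) → ℝ) :
    Vdm (n + 1) x = Vdm n (fun i => x i.castSucc) * ∏ i : Fin n, (x i.castSucc - x (Fin.last n)) := by
  have hV : ∀ n (x : Fin n → ℝ), Vdm n x = ∏ i, ∏ j, if i < j then x i - x j else 1 := by
    intro n x
    rw [Vdm, Finset.prod_filter, ← Finset.univ_product_univ, Finset.prod_product]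
  rw [hV, hV, Fin.prod_univ_castSucc]
  simp only [Fin.prod_univ_castSucc (fun j => if _ < j then _ - x j else 1),
    Fin.castSucc_lt_castSucc_iff, Fin.castSucc_lt_last, if_true, lt_self_iff_false, if_false, mul_one,
    Finset.prod_mul_distrib]
  simp [not_lt.2 (Fin.le_last _)]

lemma Vdm_add (n : ℕ) (x : Fin n → ℝ) (c : ℝ) : Vdm n (fun i => x i + c) = Vdm n x := by
  simp [Vdm]

/-- The number of patterns with `q + d` levels over a shape with at most `q` rows. The `d` rows of
length zero contribute to the Vandermonde product the ratios `(h i + d)! / h i!` and factorials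
independent of `l`; they are
added one at a time. -/
lemma ch_ncard_pad (q d : ℕ) (l : ℕ → ℕ) (hl : Antitone l) (hs : ∀ i, q ≤ i → l i = 0) :
    ((Ch (q + d) l).ncard : ℝ) * ∏ j ∈ Finset.range q, ((d + j).factorial : ℝ) =
      Vdm q (fun i => ((l i + (q - 1 - i) : ℕ) : ℝ)) *
        ∏ i : Fin q, (((l i + (q - 1 - i) + d).factorial : ℝ) /
          ((l i + (q - 1 - i)).factorial : ℝ)) := by
  induction d with
  | zero =>
    simp only [zero_add, add_zero]
    rw [weyl q l hl hs, Finset.prod_congr rfl (g := fun _ => (1 : ℝ)), Finset.prod_const_one, mul_one]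
    intro i _
    exact div_self (Nat.cast_ne_zero.2 (Nat.factorial_ne_zero _))
  | succ d ih =>
    have w1 := weyl (q + d) l hl (fun i hi => hs i (by omega))
    have w2 := weyl (q + d + 1) l hl (fun i hi => hs i (by omega))
    rw [Vdm_succ, Finset.prod_range_succ] at w2
    have e1 : Vdm (q + d) (fun i => ((l i.castSucc + (q + d + 1 - 1 - i.castSucc) : ℕ) : ℝ)) =
        Vdm (q + d) (fun i => ((l i + (q + d - 1 - i) : ℕ) : ℝ)) := by
      rw [← Vdm_add _ (fun i : Fin (q + d) => ((l i + (q + d - 1 - i) : ℕ) : ℝ)) 1]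
      congr 1
      funext i
      have := i.2
      rw [← Nat.cast_one (R := ℝ), ← Nat.cast_add, Fin.val_castSucc]
      congr 1
      omega
    rw [e1, ← w1] at w2
    have e2 : ∏ i : Fin (q + d), (((l i.castSucc + (q + d + 1 - 1 - i.castSucc) : ℕ) : ℝ) -
          ((l (Fin.last (q + d)) + (q + d + 1 - 1 - (Fin.last (q + d))) : ℕ) : ℝ)) =
        (∏ i : Fin q, ((l i + (q - 1 - i) + d + 1 : ℕ) : ℝ)) * (d.factorial : ℝ) := by
      simp only [Fin.val_castSucc, Fin.val_last]
      rw [hs (q + d) (by omega)]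
      simp only [Nat.add_sub_cancel, Nat.sub_self, add_zero, Nat.cast_zero, sub_zero]
      rw [Fin.prod_univ_add]
      congr 1
      · refine Finset.prod_congr rfl fun i _ => ?_
        have := i.2
        rw [Fin.val_castAdd]
        congr 1
        omega
      · simp only [Fin.val_natAdd]
        rw [← Finset.prod_range_add_one_eq_factorial, Nat.cast_prod,
          Fin.prod_univ_eq_prod_range (fun i => ((l (q + i) + (q + d - (q + i)) : ℕ) : ℝ)),
          ← Finset.prod_range_reflect]
        refine Finset.prod_congr rfl fun i hi => ?_
        have := Finset.mem_range.1 hi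
        rw [hs _ (by omega)]
        congr 1
        omega
    rw [e2] at w2
    have hP : (∏ j ∈ Finset.range (q + d), (j.factorial : ℝ)) ≠ 0 :=
      Finset.prod_ne_zero_iff.2 fun j _ => Nat.cast_ne_zero.2 (Nat.factorial_ne_zero _)
    have w3 : ((Ch (q + d + 1) l).ncard : ℝ) * ((q + d).factorial : ℝ) =
        ((Ch (q + d) l).ncard : ℝ) *
          ((∏ i : Fin q, ((l i + (q - 1 - i) + d + 1 : ℕ) : ℝ)) * (d.factorial : ℝ)) := by
      apply mul_right_cancel₀ hP
      linear_combination w2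
    have e3 : (d.factorial : ℝ) * ∏ j ∈ Finset.range q, ((d + 1 + j).factorial : ℝ) =
        (∏ j ∈ Finset.range q, ((d + j).factorial : ℝ)) * ((q + d).factorial : ℝ) := by
      have h1 := Finset.prod_range_succ (fun j => ((d + j).factorial : ℝ)) q
      have h2 := Finset.prod_range_succ' (fun j => ((d + j).factorial : ℝ)) q
      rw [h1] at h2
      rw [add_comm q d, h2, mul_comm, add_zero]
      congr 1
      refine Finset.prod_congr rfl fun j _ => ?_
      rw [add_right_comm, add_assoc]
    have hd : (d.factorial : ℝ) ≠ 0 := Nat.cast_ne_zero.2 (Nat.factorial_ne_zero _)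
    have hqd : ((q + d).factorial : ℝ) ≠ 0 := Nat.cast_ne_zero.2 (Nat.factorial_ne_zero _)
    have e4 : ∏ i : Fin q, (((l i + (q - 1 - i) + (d + 1)).factorial : ℝ) /
          ((l i + (q - 1 - i)).factorial : ℝ)) =
        (∏ i : Fin q, ((l i + (q - 1 - i) + d + 1 : ℕ) : ℝ)) *
        ∏ i : Fin q, (((l i + (q - 1 - i) + d).factorial : ℝ) /
          ((l i + (q - 1 - i)).factorial : ℝ)) := by
      rw [← Finset.prod_mul_distrib]
      refine Finset.prod_congr rfl fun i _ => ?_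
      rw [← add_assoc, Nat.factorial_succ, Nat.cast_mul, mul_div_assoc]
    rw [e4, mul_left_comm, ← ih, ← add_assoc]
    apply mul_right_cancel₀ (mul_ne_zero hd hqd)
    linear_combination (d.factorial : ℝ) * (∏ j ∈ Finset.range q, ((d + 1 + j).factorial : ℝ)) * w3 +
      ((Ch (q + d) l).ncard : ℝ) * (∏ i : Fin q, ((l i + (q - 1 - i) + d + 1 : ℕ) : ℝ)) *
        (d.factorial : ℝ) * e3

/-! ### Partitions as multisets and as part sequences -/

lemma nthPart_antitone (μ : Multiset ℕ) : Antitone (nthPart μ) := by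
  intro i j hij
  unfold nthPart
  have hs : ((μ.sort (· ≤ ·)).reverse).Pairwise (· ≥ ·) := by
    rw [List.pairwise_reverse]; exact Multiset.pairwise_sort μ (· ≤ ·)
  set L := (μ.sort (· ≤ ·)).reverse
  by_cases hj : j < L.length
  · rw [List.getD_eq_getElem _ _ hj, List.getD_eq_getElem _ _ (hij.trans_lt hj)]
    rcases hij.eq_or_lt with rfl | h
    · rfl
    · exact List.pairwise_iff_getElem.1 hs i j _ _ h
  · rw [List.getD_eq_default _ _ (by omega)]; exact Nat.zero_le _

lemma nthPart_of_card_le (μ : Multiset ℕ) (i : ℕ) (h : μ.card ≤ i) : nthPart μ i = 0 := by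
  unfold nthPart
  rw [List.getD_eq_default]
  simpa using h

lemma sum_nthPart (μ : Multiset ℕ) : ∑ i ∈ Finset.range μ.card, nthPart μ i = μ.sum := by
  unfold nthPart
  have h1 : μ.sum = ((μ.sort (· ≤ ·)).reverse).sum := by
    rw [List.sum_reverse, ← Multiset.sum_coe, Multiset.sort_eq]
  have h2 : μ.card = ((μ.sort (· ≤ ·)).reverse).length := by simp
  rw [h1, h2]
  generalize (μ.sort (· ≤ ·)).reverse = L
  rw [← Fin.sum_univ_eq_sum_range (fun i => L.getD i 0), ← List.sum_ofFn]
  congr 1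
  refine List.ext_getElem (by simp) fun i h1 h2 => ?_
  simp

lemma mem_shapeCells (μ : Multiset ℕ) (i j : ℕ) : (i, j) ∈ shapeCells μ ↔ j < nthPart μ i := by
  simp only [shapeCells, Finset.mem_filter, Finset.mem_product, Finset.mem_range,
    and_iff_right_iff_imp]
  intro h
  have hi : i < μ.card := by
    by_contra hi
    rw [nthPart_of_card_le μ i (by omega)] at h; omega
  refine ⟨hi, ?_⟩
  have := Finset.single_le_sum (f := nthPart μ) (fun _ _ => Nat.zero_le _) (Finset.mem_range.2 hi)
  rw [sum_nthPart] at this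
  omega

/-- `K_q` counts Gelfand–Tsetlin patterns with `q` levels. -/
lemma ssytCount_eq (q : ℕ) (μ : Multiset ℕ) : ssytCount q μ = (Ch q (nthPart μ)).ncard := by
  rw [← (tab_ch_bijOn q (nthPart_antitone μ)).ncard_eq, ssytCount]
  congr 1
  ext T
  simp only [Tab, Set.mem_ofPred_eq, Prod.forall, mem_shapeCells, not_lt]

lemma nthPart_inj (μ ν : Multiset ℕ) (hμ : ∀ a ∈ μ, 0 < a) (hν : ∀ a ∈ ν, 0 < a)
    (h : nthPart μ = nthPart ν) : μ = ν := by
  have hpos : ∀ μ : Multiset ℕ, (∀ a ∈ μ, 0 < a) → ∀ i < ((μ.sort (· ≤ ·)).reverse).length,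
      0 < nthPart μ i := by
    intro μ hμ i hi
    unfold nthPart
    rw [List.getD_eq_getElem _ _ hi]
    apply hμ
    rw [← Multiset.mem_sort (r := (· ≤ ·)), ← List.mem_reverse]
    exact List.getElem_mem _
  have h1 := hpos μ hμ
  have h2 := hpos ν hν
  have hL : (μ.sort (· ≤ ·)).reverse = (ν.sort (· ≤ ·)).reverse := by
    have hlen : ((μ.sort (· ≤ ·)).reverse).length = ((ν.sort (· ≤ ·)).reverse).length := by
      apply le_antisymm
      · by_contra hc
        have := h1 _ (not_le.1 hc)
        rw [h, nthPart_of_card_le ν _ (by simp)] at this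
        omega
      · by_contra hc
        have := h2 _ (not_le.1 hc)
        rw [← h, nthPart_of_card_le μ _ (by simp)] at this
        omega
    refine List.ext_getElem hlen fun i hi hi' => ?_
    have := congrFun h i
    unfold nthPart at this
    rwa [List.getD_eq_getElem _ _ hi, List.getD_eq_getElem _ _ hi'] at this
  have := congrArg (fun L : List ℕ => (L : Multiset ℕ)) hL
  simpa [Multiset.coe_reverse, Multiset.sort_eq] using this

/-- Every decreasing finitely supported sequence is the part sequence of a partition. -/
lemma exists_nthPart (q : ℕ) (l : ℕ → ℕ) (hl : Antitone l) (hs : ∀ i, q ≤ i → l i = 0) :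
    ∃ μ : Multiset ℕ, (∀ a ∈ μ, 0 < a) ∧ nthPart μ = l := by
  obtain ⟨n, hn0, hn1⟩ : ∃ n, (∀ i, n ≤ i → l i = 0) ∧ ∀ i < n, 0 < l i := by
    have hex : ∃ n, l n = 0 := ⟨q, hs q le_rfl⟩
    refine ⟨Nat.find hex, fun i hi => ?_, fun i hi => Nat.pos_of_ne_zero (Nat.find_min hex hi)⟩
    have := hl hi
    rw [Nat.find_spec hex] at this
    omega
  set L := (List.range n).map l with hL
  have hsort : L.reverse.Pairwise (· ≤ ·) := by
    rw [List.pairwise_reverse, hL, List.pairwise_map]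
    exact List.pairwise_lt_range.imp fun h => hl h.le
  refine ⟨(L : Multiset ℕ), ?_, ?_⟩
  · intro a ha
    simp only [hL, Multiset.mem_coe, List.mem_map, List.mem_range] at ha
    obtain ⟨i, hi, rfl⟩ := ha
    exact hn1 i hi
  · have hLs : ((L : Multiset ℕ).sort (· ≤ ·)) = L.reverse := by
      rw [← Multiset.coe_reverse, Multiset.coe_sort]
      exact List.mergeSort_eq_self _ (by simpa using hsort)
    funext i
    unfold nthPart
    rw [hLs, List.reverse_reverse]
    by_cases hi : i < n
    · rw [List.getD_eq_getElem _ _ (by simpa [hL] using hi)]; simp [hL]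
    · rw [List.getD_eq_default _ _ (by simpa [hL] using hi), hn0 i (by omega)]

/-! ### Summation over shapes and symmetrization -/

/-- Partitions, as part sequences, contained in the `q × ℓ` box. -/
def boxShapes (q ℓ : ℕ) : Set (ℕ → ℕ) :=
  {l | Antitone l ∧ (∀ i, q ≤ i → l i = 0) ∧ l 0 ≤ ℓ}

/-- The partition `l i = h i - (q - 1 - i)` attached to a strictly decreasing tuple `h`, extended by
zero. The truncated subtraction is exact for such tuples, by `strictAnti_ge`. -/
def toShape {q n : ℕ} (h : Fin q → Fin n) (i : ℕ) : ℕ :=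
  if hi : i < q then (h ⟨i, hi⟩ : ℕ) - (q - 1 - i) else 0

lemma strictAnti_ge {q n : ℕ} {h : Fin q → Fin n} (hh : StrictAnti h) (i : Fin q) :
    q - 1 - i ≤ (h i : ℕ) := by
  have key : ∀ k, ∀ i : Fin q, (i : ℕ) + k = q - 1 → k ≤ (h i : ℕ) := by
    intro k
    induction k with
    | zero => intro i _; exact Nat.zero_le _
    | succ k ih =>
      intro i hi
      have h1 := ih ⟨i + 1, by omega⟩ (by simp only; omega)
      have h2 : h ⟨i + 1, by omega⟩ < h i := hh (by rw [Fin.lt_def]; simp)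
      rw [Fin.lt_def] at h2
      omega
  exact key _ i (by omega)

lemma toShape_add {q n : ℕ} {h : Fin q → Fin n} (hh : StrictAnti h) (i : Fin q) :
    toShape h i + (q - 1 - i) = (h i : ℕ) := by
  have := strictAnti_ge hh i
  rw [toShape, dif_pos i.2]
  simp only [Fin.eta]
  omega

lemma toShape_bijOn (q ℓ : ℕ) (hq : 0 < q) :
    Set.BijOn (toShape (q := q) (n := ℓ + q)) {h | StrictAnti h} (boxShapes q ℓ) := by
  refine ⟨?_, ?_, ?_⟩
  · intro h hh
    have hh : StrictAnti h := hh
    refine ⟨antitone_nat_of_succ_le fun i => ?_, fun i hi => ?_, ?_⟩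
    · unfold toShape
      split_ifs with h1 h2
      · have h3 : h ⟨i + 1, h1⟩ < h ⟨i, h2⟩ := hh (by rw [Fin.lt_def]; simp)
        rw [Fin.lt_def] at h3
        omega
      · omega
      · omega
      · rfl
    · rw [toShape, dif_neg (by omega)]
    · rw [toShape, dif_pos hq]
      have := (h ⟨0, hq⟩).2
      omega
  · intro h hh h' hh' he
    funext i
    apply Fin.ext
    rw [← toShape_add hh, ← toShape_add hh', he]
  · rintro l ⟨hl, hs, h0⟩
    have hb : ∀ i : Fin q, l i + (q - 1 - i) < ℓ + q := by
      intro i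
      have := hl (Nat.zero_le (i : ℕ))
      omega
    refine ⟨fun i => ⟨l i + (q - 1 - i), hb i⟩, ?_, ?_⟩
    · intro i j hij
      rw [Fin.lt_def] at hij ⊢
      have := hl hij.le
      simp only
      omega
    · funext i
      unfold toShape
      split_ifs with hi
      · simp
      · exact (hs i (by omega)).symm

lemma boxShapes_finite (q ℓ : ℕ) (hq : 0 < q) : (boxShapes q ℓ).Finite :=
  (toShape_bijOn q ℓ hq).finite_iff_finite.1 (Set.toFinite _)

lemma sum_toShape {q n : ℕ} {h : Fin q → Fin n} (hh : StrictAnti h) :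
    ∑ i, (h i : ℕ) = ∑ i ∈ Finset.range q, toShape h i + q * (q - 1) / 2 := by
  rw [← Finset.sum_range_id, ← Finset.sum_range_reflect (fun i => i), ← Finset.sum_add_distrib,
    ← Fin.sum_univ_eq_sum_range (fun i => toShape h i + (q - 1 - i))]
  exact Finset.sum_congr rfl fun i _ => (toShape_add hh i).symm

lemma Vdm_perm_sq {n : ℕ} (x : Fin n → ℝ) (σ : Equiv.Perm (Fin n)) :
    Vdm n (fun i => x (σ i)) ^ 2 = Vdm n x ^ 2 := by
  rw [Vdm_eq_det, Vdm_eq_det]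
  have := Matrix.det_permute σ (Matrix.of fun i j : Fin n => rise j (-(x i)))
  rw [show (Matrix.of fun i j : Fin n => rise j (-(x (σ i)))) =
    (Matrix.of fun i j : Fin n => rise j (-(x i))).submatrix σ id from rfl, this, mul_pow]
  rcases Int.units_eq_one_or (Equiv.Perm.sign σ) with h | h <;> simp [h]

lemma Vdm_eq_zero {n : ℕ} (x : Fin n → ℝ) {i j : Fin n} (hij : i ≠ j) (h : x i = x j) :
    Vdm n x = 0 := by
  rw [Vdm_eq_det]
  exact Matrix.det_zero_of_row_eq hij (by funext k; simp [h])

/-- A symmetric function that vanishes on tuples with a repeated entry has the sum `q!` times its sum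
over strictly decreasing tuples. -/
lemma sum_symm {q n : ℕ} (F : (Fin q → Fin n) → ℝ)
    (hsymm : ∀ h (σ : Equiv.Perm (Fin q)), F (h ∘ σ) = F h)
    (hzero : ∀ h, ¬ Function.Injective h → F h = 0) :
    ∑ h, F h = (q.factorial : ℝ) * ∑ h ∈ Finset.univ.filter StrictAnti, F h := by
  have h1 : ∑ h, F h = ∑ h ∈ Finset.univ.filter Function.Injective, F h := by
    rw [Finset.sum_filter_of_ne]
    intro h _ hne
    by_contra hc
    exact hne (hzero h hc)
  have h2 : (q.factorial : ℝ) * ∑ h ∈ Finset.univ.filter StrictAnti, F h =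
      ∑ x ∈ (Finset.univ : Finset (Equiv.Perm (Fin q))) ×ˢ
        (Finset.univ.filter StrictAnti : Finset (Fin q → Fin n)), F (x.2 ∘ x.1) := by
    rw [Finset.sum_product]
    simp only [hsymm]
    rw [Finset.sum_const, Finset.card_univ, Fintype.card_perm, Fintype.card_fin, nsmul_eq_mul]
  rw [h1, h2]
  symm
  refine Finset.sum_bij (fun x _ => x.2 ∘ x.1) ?_ ?_ ?_ (fun _ _ => rfl)
  · rintro ⟨σ, h⟩ hx
    simp only [Finset.mem_product, Finset.mem_filter, Finset.mem_univ, true_and] at hx ⊢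
    exact hx.injective.comp σ.injective
  · rintro ⟨σ, h⟩ hx ⟨τ, k⟩ hy he
    simp only [Finset.mem_product, Finset.mem_filter, Finset.mem_univ, true_and] at hx hy he
    have e1 : (h ∘ σ) ∘ (σ⁻¹ : Equiv.Perm (Fin q)) = h := by funext i; simp
    have e2 : (h ∘ σ) ∘ (τ⁻¹ : Equiv.Perm (Fin q)) = k := by rw [he]; funext i; simp
    have := Tuple.unique_antitone (f := h ∘ σ) (σ := σ⁻¹) (τ := τ⁻¹)
      (by rw [e1]; exact hx.antitone) (by rw [e2]; exact hy.antitone)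
    rw [e1, e2] at this
    subst this
    refine Prod.ext (Equiv.ext fun i => hx.injective (congrFun he i)) rfl
  · intro h hh
    simp only [Finset.mem_filter, Finset.mem_univ, true_and] at hh
    have hm : StrictMono (h ∘ Tuple.sort h) :=
      (Tuple.monotone_sort h).strictMono_of_injective (hh.comp (Tuple.sort h).injective)
    refine ⟨((Fin.revPerm.trans (Tuple.sort h)).symm, h ∘ (Fin.revPerm.trans (Tuple.sort h))), ?_, ?_⟩
    · simp only [Finset.mem_product, Finset.mem_filter, Finset.mem_univ, true_and]
      intro i j hij
      exact hm (Fin.rev_lt_rev.2 hij)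
    · funext i
      simp only [Function.comp_apply, Equiv.apply_symm_apply]

theorem stmt6 (ξ : ℝ) (hξ0 : 0 < ξ) (hξ1 : ξ < 1) (p q ℓ : ℕ) (hq : 1 ≤ q) (hpq : q ≤ p) :
    Summable (fun W : GoodW p q ℓ =>
        (1 - ξ) ^ (p * q) * ξ ^ (∑ i ∈ Finset.range p, ∑ j ∈ Finset.range q, (W : ℕ → ℕ → ℕ) i j))
    ∧ (∑' W : GoodW p q ℓ,
          (1 - ξ) ^ (p * q) * ξ ^ (∑ i ∈ Finset.range p, ∑ j ∈ Finset.range q, (W : ℕ → ℕ → ℕ) i j))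
      = ∑' nn : ℕ, ∑ lam ∈ Finset.univ.filter (fun lam : Nat.Partition nn => nthPart lam.parts 0 ≤ ℓ),
          (1 - ξ) ^ (p * q) * ξ ^ nn * (ssytCount p lam.parts : ℝ) * (ssytCount q lam.parts : ℝ)
    ∧ (∑' nn : ℕ, ∑ lam ∈ Finset.univ.filter (fun lam : Nat.Partition nn => nthPart lam.parts 0 ≤ ℓ),
          (1 - ξ) ^ (p * q) * ξ ^ nn * (ssytCount p lam.parts : ℝ) * (ssytCount q lam.parts : ℝ))
      = (ξ ^ (q * (q - 1) / 2) * ((1 - ξ) ^ (p * q))⁻¹ * (q.factorial : ℝ) *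
          ∏ j ∈ Finset.range q, ((j.factorial : ℝ) * ((p - q + j).factorial : ℝ)))⁻¹ *
        ∑ h : Fin q → Fin (ℓ + q),
          (Vdm q (fun i => ((h i : ℕ) : ℝ))) ^ 2 *
          ∏ i, ((((h i : ℕ) + (p - q)).factorial : ℝ) / ((h i : ℕ).factorial : ℝ) *
            ξ ^ ((h i : ℕ))) := by
  have hp : 0 < p := by omega
  -- `L(W) ≤ ℓ` is a condition on the first part of the RSK shape
  have hGood : GoodW p q ℓ = {W | W ∈ Mat p q ∧ growth W p q 0 ≤ ℓ} := by
    ext W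
    simp only [GoodW, Mat, Set.mem_ofPred_eq, Lnat_eq hp hq]
  set S := (boxShapes_finite q ℓ hq).toFinset with hS
  have hmemS : ∀ l, l ∈ S ↔ l ∈ boxShapes q ℓ := fun l => Set.Finite.mem_toFinset _
  have hshape : ∀ W ∈ GoodW p q ℓ, growth W p q ∈ S := by
    intro W hW
    rw [hGood] at hW
    rw [hmemS]
    exact ⟨ch_antitone ((rsk_bijOn hp _).1 ⟨hW.1, rfl⟩).1, fun i hi => growth_supp W p q i hi, hW.2⟩
  have hfib : ∀ l, {W | W ∈ Mat p q ∧ growth W p q = l}.Finite := fun l =>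
    (rsk_bijOn hp l).finite_iff_finite.2 ((ch_finite _ _).prod (ch_finite _ _))
  have hfin : (GoodW p q ℓ).Finite := by
    refine (S.finite_toSet.biUnion (fun l _ => hfib l)).subset fun W hW => ?_
    simp only [Set.mem_iUnion]
    exact ⟨growth W p q, hshape W hW, by rw [hGood] at hW; exact hW.1, rfl⟩
  -- the common finite sum over shapes in the `q × ℓ` box
  set G : (ℕ → ℕ) → ℝ := fun l => (1 - ξ) ^ (p * q) * ξ ^ (∑ i ∈ Finset.range q, l i) *
    ((Ch p l).ncard : ℝ) * ((Ch q l).ncard : ℝ) with hG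
  have hsum1 : (∑' W : GoodW p q ℓ,
      (1 - ξ) ^ (p * q) * ξ ^ (∑ i ∈ Finset.range p, ∑ j ∈ Finset.range q, (W : ℕ → ℕ → ℕ) i j))
      = ∑ l ∈ S, G l := by
    obtain ⟨F, hF⟩ := hfin.exists_finset_coe
    rw [← hF, Finset.tsum_subtype' F (fun W : ℕ → ℕ → ℕ =>
      (1 - ξ) ^ (p * q) * ξ ^ (∑ i ∈ Finset.range p, ∑ j ∈ Finset.range q, W i j))]
    rw [← Finset.sum_fiberwise_of_maps_to (s := F) (t := S) (g := fun W => growth W p q)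
      (fun W hW => hshape W (by rw [← hF]; exact hW))]
    refine Finset.sum_congr rfl fun l hl => ?_
    have hcard : (F.filter fun W => growth W p q = l).card = (Ch q l).ncard * (Ch p l).ncard := by
      rw [← Set.ncard_prod, ← (rsk_bijOn hp l).ncard_eq, ← Set.ncard_coe_finset]
      congr 1
      ext W
      rw [Finset.coe_filter]
      simp only [Set.mem_ofPred_eq]
      rw [← Finset.mem_coe, hF, hGood]
      simp only [Set.mem_ofPred_eq]
      constructor
      · rintro ⟨⟨h1, _⟩, h2⟩; exact ⟨h1, h2⟩
      · rintro ⟨h1, rfl⟩; exact ⟨⟨h1, ((hmemS _).1 hl).2.2⟩, rfl⟩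
    rw [Finset.sum_congr rfl (g := fun _ => (1 - ξ) ^ (p * q) * ξ ^ (∑ i ∈ Finset.range q, l i)),
      Finset.sum_const, hcard, nsmul_eq_mul, hG]
    · push_cast; ring
    · intro W hW
      rw [← growth_sum W q p q le_rfl, (Finset.mem_filter.1 hW).2]
  have hsum2 : (∑' nn : ℕ, ∑ lam ∈ Finset.univ.filter
        (fun lam : Nat.Partition nn => nthPart lam.parts 0 ≤ ℓ),
      (1 - ξ) ^ (p * q) * ξ ^ nn * (ssytCount p lam.parts : ℝ) * (ssytCount q lam.parts : ℝ))
      = ∑ l ∈ S, G l := by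
    -- shapes with more than `q` rows have `K_q = 0`, so only the box contributes
    set G' : (ℕ → ℕ) → ℝ := fun l => if l ∈ S then G l else 0 with hG'
    set r : (Σ nn, Nat.Partition nn) → (ℕ → ℕ) := fun x => nthPart x.2.parts with hr
    have hrinj : Function.Injective r := by
      rintro ⟨m, a⟩ ⟨n, b⟩ h
      have := nthPart_inj a.parts b.parts (fun _ => a.parts_pos) (fun _ => b.parts_pos) h
      obtain rfl : m = n := by rw [← a.parts_sum, ← b.parts_sum, this]
      rw [Nat.Partition.ext this]
    have hsupp : Function.support G' ⊆ S := by
      intro l hl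
      by_contra hc
      exact hl (if_neg hc)
    have hrange : Function.support G' ⊆ Set.range r := by
      intro l hl
      have hl := (hmemS l).1 (hsupp hl)
      obtain ⟨μ, hμ, rfl⟩ := exists_nthPart q l hl.1 hl.2.1
      exact ⟨⟨μ.sum, ⟨μ, fun h => hμ _ h, rfl⟩⟩, rfl⟩
    have hterm : ∀ nn : ℕ, ∑ lam ∈ Finset.univ.filter
        (fun lam : Nat.Partition nn => nthPart lam.parts 0 ≤ ℓ),
        (1 - ξ) ^ (p * q) * ξ ^ nn * (ssytCount p lam.parts : ℝ) * (ssytCount q lam.parts : ℝ)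
        = ∑' lam : Nat.Partition nn, G' (r ⟨nn, lam⟩) := by
      intro nn
      rw [tsum_fintype, Finset.sum_filter]
      refine Finset.sum_congr rfl fun lam _ => ?_
      simp only [ssytCount_eq, hG', hr, hmemS]
      by_cases hs : ∀ i, q ≤ i → nthPart lam.parts i = 0
      · by_cases h0 : nthPart lam.parts 0 ≤ ℓ
        · rw [if_pos h0, if_pos ⟨nthPart_antitone _, hs, h0⟩, hG]
          have hsz : ∑ i ∈ Finset.range q, nthPart lam.parts i = nn := by
            refine Eq.trans ?_ lam.parts_sum
            rw [← sum_nthPart]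
            rcases le_total q lam.parts.card with h | h
            · refine Finset.sum_subset (Finset.range_mono h) fun i _ hi => hs i ?_
              simpa using hi
            · refine (Finset.sum_subset (Finset.range_mono h) fun i _ hi => ?_).symm
              exact nthPart_of_card_le _ _ (by simpa using hi)
          simp only [hsz]
        · rw [if_neg h0, if_neg (fun h => h0 h.2.2)]
      · rw [if_neg (fun h : nthPart lam.parts ∈ boxShapes q ℓ => hs h.2.1)]
        push Not at hs
        obtain ⟨i, hi, hne⟩ := hs
        rw [ch_empty i hi hne]
        simp
    have hsummable : Summable (fun x => G' (r x)) :=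
      (hrinj.summable_iff (f := G') (fun l hl => by
        by_contra h; exact hl (hrange h))).2
        (summable_of_ne_finset_zero (s := S) fun l hl => if_neg hl)
    simp_rw [hterm]
    rw [← hsummable.tsum_sigma' (fun n => Summable.of_finite),
      hrinj.tsum_eq hrange, tsum_eq_sum (s := S) (fun l hl => if_neg hl)]
    exact Finset.sum_congr rfl fun l hl => if_pos hl
  have hsum3 : (ξ ^ (q * (q - 1) / 2) * ((1 - ξ) ^ (p * q))⁻¹ * (q.factorial : ℝ) *
          ∏ j ∈ Finset.range q, ((j.factorial : ℝ) * ((p - q + j).factorial : ℝ)))⁻¹ *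
        ∑ h : Fin q → Fin (ℓ + q),
          (Vdm q (fun i => ((h i : ℕ) : ℝ))) ^ 2 *
          ∏ i, ((((h i : ℕ) + (p - q)).factorial : ℝ) / ((h i : ℕ).factorial : ℝ) *
            ξ ^ ((h i : ℕ))) = ∑ l ∈ S, G l := by
    rw [sum_symm]
    · have hST : S = (Finset.univ.filter StrictAnti : Finset (Fin q → Fin (ℓ + q))).image toShape := by
        apply Finset.coe_injective
        rw [Finset.coe_image, hS, Set.Finite.coe_toFinset, ← (toShape_bijOn q ℓ hq).image_eq]
        simp
      rw [hST, Finset.sum_image, Finset.mul_sum, Finset.mul_sum]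
      · refine Finset.sum_congr rfl fun h hh => ?_
        have hh : StrictAnti h := by simpa using hh
        have hbox := (toShape_bijOn q ℓ hq).1 hh
        have w1 := weyl q (toShape h) hbox.1 hbox.2.1
        have w2 := ch_ncard_pad q (p - q) (toShape h) hbox.1 hbox.2.1
        rw [Nat.add_sub_cancel' hpq] at w2
        simp only [toShape_add hh] at w1 w2
        rw [Finset.prod_mul_distrib, Finset.prod_mul_distrib, Finset.prod_pow_eq_pow_sum,
          sum_toShape hh, pow_add, hG]
        dsimp only
        set V := Vdm q (fun i => ((h i : ℕ) : ℝ))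
        set A := ∏ j ∈ Finset.range q, (j.factorial : ℝ) with hA
        set B := ∏ j ∈ Finset.range q, ((p - q + j).factorial : ℝ) with hB
        set R := ∏ i, (((h i : ℕ) + (p - q)).factorial : ℝ) / ((h i : ℕ).factorial : ℝ)
        have hA0 : A ≠ 0 :=
          Finset.prod_ne_zero_iff.2 fun j _ => Nat.cast_ne_zero.2 (Nat.factorial_ne_zero _)
        have hB0 : B ≠ 0 :=
          Finset.prod_ne_zero_iff.2 fun j _ => Nat.cast_ne_zero.2 (Nat.factorial_ne_zero _)
        have hq0 : (q.factorial : ℝ) ≠ 0 := Nat.cast_ne_zero.2 (Nat.factorial_ne_zero _)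
        have hc : (1 - ξ) ^ (p * q) ≠ 0 := pow_ne_zero _ (by linarith)
        have he : ξ ^ (q * (q - 1) / 2) ≠ 0 := pow_ne_zero _ hξ0.ne'
        have hVR : V ^ 2 * R = ((Ch p (toShape h)).ncard : ℝ) * ((Ch q (toShape h)).ncard : ℝ) *
            (A * B) := by
          linear_combination (-V) * w2 - ((Ch p (toShape h)).ncard : ℝ) * B * w1
        rw [← mul_assoc (V ^ 2), hVR]
        field_simp
      · rw [Finset.coe_filter]
        simpa using (toShape_bijOn q ℓ hq).2.1
    · intro h σ
      simp only [Function.comp_apply]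
      rw [Vdm_perm_sq (fun i => ((h i : ℕ) : ℝ)) σ, Equiv.prod_comp σ (fun i =>
        ((((h i : ℕ) + (p - q)).factorial : ℝ) / ((h i : ℕ).factorial : ℝ) * ξ ^ ((h i : ℕ))))]
    · intro h hh
      rw [Function.not_injective_iff] at hh
      obtain ⟨i, j, he, hne⟩ := hh
      rw [Vdm_eq_zero _ hne (by simp [he])]
      simp
  refine ⟨?_, by rw [hsum1, hsum2], by rw [hsum2, hsum3]⟩
  have : Finite (GoodW p q ℓ) := hfin
  exact Summable.of_finite
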